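/- Let Ω ⊆ ℝ^N be Lebesgue measurable with |Ω| = ∞, T > 0 and φ > 1. Then for every real σ > dim̄_B^φ(∞,Ω), the identity ∫_{B_T(0)^c ∩ Ω} |x|^{-σ-N} dx = (σ + N) ∫_T^{+∞} t^{-σ-N-1} |B_{T,t}(0) ∩ Ω| dt holds and both integrals are finite. -/

import Mathlib

open MeasureTheory Filter Set
open scoped ENNReal NNReal Topology

noncomputable section

/-- The `[a,b)`-shell centered at the origin in `ℝ^N`. -/
def shell (N : ℕ) (a b : ℝ) : Set (EuclideanSpace ℝ (Fin N)) :=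
  {x | a ≤ ‖x‖ ∧ ‖x‖ < b}

/-- The complement of the open ball `B_t(0)` in `ℝ^N`. -/
def farBall (N : ℕ) (t : ℝ) : Set (EuclideanSpace ℝ (Fin N)) :=
  {x | t ≤ ‖x‖}

/-- Upper φ-shell Minkowski content of `Ω` at infinity. -/
def upperShellContent (N : ℕ) (Ω : Set (EuclideanSpace ℝ (Fin N))) (φ r : ℝ) : ℝ≥0∞ :=
  Filter.limsup (fun t : ℝ =>
    volume (shell N t (φ * t) ∩ Ω) / ENNReal.ofReal (t ^ ((N : ℝ) + r))) Filter.atTop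

/-- Lower φ-shell Minkowski content of `Ω` at infinity. -/
def lowerShellContent (N : ℕ) (Ω : Set (EuclideanSpace ℝ (Fin N))) (φ r : ℝ) : ℝ≥0∞ :=
  Filter.liminf (fun t : ℝ =>
    volume (shell N t (φ * t) ∩ Ω) / ENNReal.ofReal (t ^ ((N : ℝ) + r))) Filter.atTop

/-- Upper Minkowski content of `Ω` at infinity. -/
def upperContent (N : ℕ) (Ω : Set (EuclideanSpace ℝ (Fin N))) (r : ℝ) : ℝ≥0∞ :=
  Filter.limsup (fun t : ℝ =>
    volume (farBall N t ∩ Ω) / ENNReal.ofReal (t ^ ((N : ℝ) + r))) Filter.atTop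

/-- Lower Minkowski content of `Ω` at infinity. -/
def lowerContent (N : ℕ) (Ω : Set (EuclideanSpace ℝ (Fin N))) (r : ℝ) : ℝ≥0∞ :=
  Filter.liminf (fun t : ℝ =>
    volume (farBall N t ∩ Ω) / ENNReal.ofReal (t ^ ((N : ℝ) + r))) Filter.atTop

/-- Upper φ-shell Minkowski dimension of `Ω` at infinity, as an extended real. -/
def upperShellDim (N : ℕ) (Ω : Set (EuclideanSpace ℝ (Fin N))) (φ : ℝ) : EReal :=
  sInf ((fun r : ℝ => (r : EReal)) '' {r : ℝ | upperShellContent N Ω φ r = 0})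

/-- Lower φ-shell Minkowski dimension of `Ω` at infinity, as an extended real. -/
def lowerShellDim (N : ℕ) (Ω : Set (EuclideanSpace ℝ (Fin N))) (φ : ℝ) : EReal :=
  sInf ((fun r : ℝ => (r : EReal)) '' {r : ℝ | lowerShellContent N Ω φ r = 0})

/-!
Split `{x | T ≤ ‖x‖}` into a bounded shell and the shells `aφⁿ ≤ ‖x‖ < aφⁿ⁺¹`. For `r < σ` with
finite `r`-dimensional content, the `n`-th shell meets `Ω` in volume `O((aφⁿ)^(N+r))`, and `‖x‖` is
comparable to `aφⁿ` there, so the integral of `‖x‖ ^ (-σ-N)` is dominated by a geometric series of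
ratio `φ^(r-σ) < 1`. The same series with exponent `0` shows that a set of infinite measure has
dimension at least `-N`. The identity is then Tonelli's theorem applied to
`y ^ (-p) = p * ∫ t in Ioi y, t ^ (-p-1)` with `p = σ + N`, which that bound makes positive.
-/

section LayerCake

variable {α : Type*} [MeasurableSpace α] {μ : Measure α} [SFinite μ] {f : α → ℝ}

theorem lintegral_lintegral_Ioi_eq_lintegral_mul_measure {ν : Measure ℝ} [SFinite ν]
    (hf : Measurable f) {g : ℝ → ℝ≥0∞} (hg : Measurable g) :
    ∫⁻ x, ∫⁻ t in Ioi (f x), g t ∂ν ∂μ = ∫⁻ t, g t * μ (f ⁻¹' Iio t) ∂ν := by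
  have hmeas : Measurable
      (Function.uncurry fun (x : α) (t : ℝ) => (Ioi (f x)).indicator g t) :=
    (hg.comp measurable_snd).indicator
      (measurableSet_lt (hf.comp measurable_fst) measurable_snd)
  calc ∫⁻ x, ∫⁻ t in Ioi (f x), g t ∂ν ∂μ
      = ∫⁻ x, ∫⁻ t, (Ioi (f x)).indicator g t ∂ν ∂μ := by
        simp only [lintegral_indicator measurableSet_Ioi]
    _ = ∫⁻ t, ∫⁻ x, (f ⁻¹' Iio t).indicator (fun _ => g t) x ∂μ ∂ν :=
        lintegral_lintegral_swap hmeas.aemeasurable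
    _ = ∫⁻ t, g t * μ (f ⁻¹' Iio t) ∂ν := by
        simp only [lintegral_indicator_const (hf measurableSet_Iio)]

theorem ofReal_rpow_neg_eq_mul_lintegral_Ioi {p y : ℝ} (hp : 0 < p) (hy : 0 < y) :
    ENNReal.ofReal (y ^ (-p)) =
      ENNReal.ofReal p * ∫⁻ t in Ioi y, ENNReal.ofReal (t ^ (-p - 1)) := by
  have hexp : -p - 1 < -1 := by linarith
  have hnonneg : ∀ᵐ t ∂volume.restrict (Ioi y), 0 ≤ t ^ (-p - 1) :=
    (ae_restrict_mem measurableSet_Ioi).mono fun t ht => Real.rpow_nonneg (hy.trans ht).le _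
  rw [← ofReal_integral_eq_lintegral_ofReal (integrableOn_Ioi_rpow_of_lt hexp hy) hnonneg,
    integral_Ioi_rpow_of_lt hexp hy, ← ENNReal.ofReal_mul hp.le, sub_add_cancel]
  congr 1
  field_simp

theorem setLIntegral_rpow_neg_eq_mul_lintegral_measure_Ico (hf : Measurable f) {T p : ℝ}
    (hT : 0 < T) (hp : 0 < p) :
    ∫⁻ x in f ⁻¹' Ici T, ENNReal.ofReal (f x ^ (-p)) ∂μ =
      ENNReal.ofReal p *
        ∫⁻ t in Ioi T, ENNReal.ofReal (t ^ (-p - 1)) * μ (f ⁻¹' Ico T t) := by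
  have hinner : ∀ x ∈ f ⁻¹' Ici T, ENNReal.ofReal (f x ^ (-p)) = ENNReal.ofReal p *
      ∫⁻ t in Ioi (f x), ENNReal.ofReal (t ^ (-p - 1)) ∂volume.restrict (Ioi T) := by
    intro x hx
    rw [Measure.restrict_restrict measurableSet_Ioi,
      inter_eq_self_of_subset_left (Ioi_subset_Ioi hx)]
    exact ofReal_rpow_neg_eq_mul_lintegral_Ioi hp (hT.trans_le hx)
  have hIco (t : ℝ) : μ.restrict (f ⁻¹' Ici T) (f ⁻¹' Iio t) = μ (f ⁻¹' Ico T t) := by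
    rw [Measure.restrict_apply (hf measurableSet_Iio), ← preimage_inter, inter_comm,
      Ici_inter_Iio]
  rw [setLIntegral_congr_fun (hf measurableSet_Ici) hinner,
    lintegral_const_mul' _ _ ENNReal.ofReal_ne_top,
    lintegral_lintegral_Ioi_eq_lintegral_mul_measure hf (by fun_prop)]
  simp only [hIco]

end LayerCake

section GeometricShells

variable {α : Type*} [MeasurableSpace α] {μ : Measure α} {f : α → ℝ}

theorem rpow_le_rpow_add_rpow_of_mem_Icc {a b y : ℝ} (s : ℝ) (ha : 0 < a) (hy : y ∈ Icc a b) :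
    y ^ s ≤ a ^ s + b ^ s := by
  have hy₀ : 0 < y := ha.trans_le hy.1
  rcases le_total 0 s with hs | hs
  · exact (Real.rpow_le_rpow hy₀.le hy.2 hs).trans
      (le_add_of_nonneg_left (Real.rpow_nonneg ha.le s))
  · exact (Real.rpow_le_rpow_of_nonpos ha hy.1 hs).trans
      (le_add_of_nonneg_right (Real.rpow_nonneg (hy₀.le.trans hy.2) s))

theorem setLIntegral_preimage_Ico_rpow_le (hf : Measurable f) {a : ℝ} (b s : ℝ) (ha : 0 < a) :
    ∫⁻ x in f ⁻¹' Ico a b, ENNReal.ofReal (f x ^ s) ∂μ ≤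
      ENNReal.ofReal (a ^ s + b ^ s) * μ (f ⁻¹' Ico a b) := by
  rw [← setLIntegral_const]
  exact setLIntegral_mono' (hf measurableSet_Ico) fun x hx =>
    ENNReal.ofReal_le_ofReal (rpow_le_rpow_add_rpow_of_mem_Icc s ha (Ico_subset_Icc_self hx))

theorem setLIntegral_preimage_Ico_mul_rpow_le_of_measure_le (hf : Measurable f) {C : ℝ≥0}
    {b φ q s : ℝ} (hb : 0 < b) (hφ : 0 ≤ φ)
    (hμ : μ (f ⁻¹' Ico b (φ * b)) ≤ C * ENNReal.ofReal (b ^ q)) :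
    ∫⁻ x in f ⁻¹' Ico b (φ * b), ENNReal.ofReal (f x ^ s) ∂μ ≤
      C * ENNReal.ofReal ((1 + φ ^ s) * b ^ (s + q)) := by
  calc ∫⁻ x in f ⁻¹' Ico b (φ * b), ENNReal.ofReal (f x ^ s) ∂μ
      ≤ ENNReal.ofReal (b ^ s + (φ * b) ^ s) * (C * ENNReal.ofReal (b ^ q)) :=
        (setLIntegral_preimage_Ico_rpow_le hf _ s hb).trans (by gcongr)
    _ = C * ENNReal.ofReal ((b ^ s + (φ * b) ^ s) * b ^ q) := by
        rw [mul_left_comm, ← ENNReal.ofReal_mul (by positivity)]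
    _ = C * ENNReal.ofReal ((1 + φ ^ s) * b ^ (s + q)) := by
        rw [Real.mul_rpow hφ hb.le, Real.rpow_add hb]
        ring_nf

theorem iUnion_Ico_mul_pow_eq_Ici {a φ : ℝ} (ha : 0 < a) (hφ : 1 < φ) :
    ⋃ n : ℕ, Ico (a * φ ^ n) (φ * (a * φ ^ n)) = Ici a := by
  have hunbounded : ¬BddAbove (range fun n : ℕ => a * φ ^ n) :=
    not_bddAbove_of_tendsto_atTop ((tendsto_pow_atTop_atTop_of_one_lt hφ).const_mul_atTop ha)
  have hle (n : ℕ) : a * φ ^ 0 ≤ a * φ ^ n := by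
    gcongr
    exacts [hφ.le, n.zero_le]
  simpa [pow_succ', mul_left_comm] using iUnion_Ico_map_succ_eq_Ici hle hunbounded

theorem tsum_ofReal_mul_rpow_mul_pow_lt_top {a c p φ : ℝ} (ha : 0 ≤ a) (hφ : 1 < φ)
    (hp : p < 0) : ∑' n : ℕ, ENNReal.ofReal (c * (a * φ ^ n) ^ p) < ⊤ := by
  have hφ₀ : 0 ≤ φ := zero_le_one.trans hφ.le
  have hterm (n : ℕ) : c * (a * φ ^ n) ^ p = c * a ^ p * (φ ^ p) ^ n := by
    rw [Real.mul_rpow ha (pow_nonneg hφ₀ n), Real.rpow_pow_comm hφ₀, mul_assoc]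
  simp only [hterm]
  exact ((summable_geometric_of_lt_one (Real.rpow_nonneg hφ₀ p)
    (Real.rpow_lt_one_of_one_lt_of_neg hφ hp)).mul_left _).tsum_ofReal_lt_top

theorem setLIntegral_preimage_Ici_rpow_lt_top (hf : Measurable f) {C : ℝ≥0} {T φ q s : ℝ}
    (hT : 0 < T) (hφ : 1 < φ) (hfin : ∀ b, μ (f ⁻¹' Ico T b) < ⊤)
    (hgrowth : ∀ᶠ t in atTop, μ (f ⁻¹' Ico t (φ * t)) ≤ C * ENNReal.ofReal (t ^ q))
    (hs : s + q < 0) :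
    ∫⁻ x in f ⁻¹' Ici T, ENNReal.ofReal (f x ^ s) ∂μ < ⊤ := by
  obtain ⟨a, hbound, ha⟩ :=
    ((eventually_forall_ge_atTop.2 hgrowth).and (eventually_gt_atTop 0)).exists
  have hcover : f ⁻¹' Ici T ⊆
      f ⁻¹' Ico T a ∪ ⋃ n : ℕ, f ⁻¹' Ico (a * φ ^ n) (φ * (a * φ ^ n)) := by
    rw [← preimage_iUnion, iUnion_Ico_mul_pow_eq_Ici ha hφ, ← preimage_union]
    exact preimage_mono Ici_subset_Ico_union_Ici
  have hbounded : ∫⁻ x in f ⁻¹' Ico T a, ENNReal.ofReal (f x ^ s) ∂μ < ⊤ :=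
    (setLIntegral_preimage_Ico_rpow_le hf a s hT).trans_lt
      (ENNReal.mul_lt_top ENNReal.ofReal_lt_top (hfin a))
  have hshell (n : ℕ) :
      ∫⁻ x in f ⁻¹' Ico (a * φ ^ n) (φ * (a * φ ^ n)), ENNReal.ofReal (f x ^ s) ∂μ ≤
        C * ENNReal.ofReal ((1 + φ ^ s) * (a * φ ^ n) ^ (s + q)) :=
    setLIntegral_preimage_Ico_mul_rpow_le_of_measure_le hf (by positivity) (by positivity)
      (hbound _ (le_mul_of_one_le_right ha.le (one_le_pow₀ hφ.le)))
  have htail : ∫⁻ x in ⋃ n : ℕ, f ⁻¹' Ico (a * φ ^ n) (φ * (a * φ ^ n)),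
      ENNReal.ofReal (f x ^ s) ∂μ < ⊤ := by
    refine ((lintegral_iUnion_le _ _).trans (ENNReal.tsum_le_tsum hshell)).trans_lt ?_
    rw [ENNReal.tsum_mul_left]
    exact ENNReal.mul_lt_top ENNReal.coe_lt_top (tsum_ofReal_mul_rpow_mul_pow_lt_top ha.le hφ hs)
  exact ((lintegral_mono_set hcover).trans (lintegral_union_le _ _ _)).trans_lt
    (ENNReal.add_lt_top.2 ⟨hbounded, htail⟩)

end GeometricShells

section ShellDimension

variable {N : ℕ} {Ω : Set (EuclideanSpace ℝ (Fin N))} {φ r : ℝ}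

theorem measurableSet_shell (a b : ℝ) : MeasurableSet (shell N a b) :=
  measurable_norm measurableSet_Ico

theorem measurableSet_farBall (t : ℝ) : MeasurableSet (farBall N t) :=
  measurable_norm measurableSet_Ici

theorem volume_shell_lt_top (a b : ℝ) : volume (shell N a b) < ⊤ :=
  (measure_mono fun _ hx => mem_ball_zero_iff.2 hx.2).trans_lt measure_ball_lt_top

theorem exists_eventually_volume_shell_le (h : upperShellContent N Ω φ r < ⊤) :
    ∃ C : ℝ≥0, ∀ᶠ t in atTop,
      volume (shell N t (φ * t) ∩ Ω) ≤ C * ENNReal.ofReal (t ^ ((N : ℝ) + r)) := by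
  obtain ⟨C, hC, -⟩ := ENNReal.lt_iff_exists_nnreal_btwn.1 h
  refine ⟨C, ?_⟩
  filter_upwards [eventually_lt_of_limsup_lt hC, eventually_gt_atTop 0] with t ht ht₀
  have hpos : ENNReal.ofReal (t ^ ((N : ℝ) + r)) ≠ 0 :=
    (ENNReal.ofReal_pos.2 (Real.rpow_pos_of_pos ht₀ _)).ne'
  exact (ENNReal.div_le_iff hpos ENNReal.ofReal_ne_top).1 ht.le

theorem setLIntegral_farBall_rpow_norm_lt_top {T s : ℝ} (hT : 0 < T) (hφ : 1 < φ)
    (hr : upperShellContent N Ω φ r < ⊤) (hs : s + (N + r) < 0) :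
    ∫⁻ x in farBall N T ∩ Ω, ENNReal.ofReal (‖x‖ ^ s) < ⊤ := by
  obtain ⟨C, hC⟩ := exists_eventually_volume_shell_le hr
  rw [← Measure.restrict_restrict (measurableSet_farBall T)]
  refine setLIntegral_preimage_Ici_rpow_lt_top (C := C) measurable_norm hT hφ
    (fun b => (Measure.restrict_apply_le _ _).trans_lt (volume_shell_lt_top T b))
    (hC.mono fun t ht => ?_) hs
  exact (Measure.restrict_apply (measurableSet_shell t (φ * t))).trans_le ht

theorem setLIntegral_farBall_rpow_norm_neg_eq (Ω : Set (EuclideanSpace ℝ (Fin N))) {T p : ℝ}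
    (hT : 0 < T) (hp : 0 < p) :
    ∫⁻ x in farBall N T ∩ Ω, ENNReal.ofReal (‖x‖ ^ (-p)) =
      ENNReal.ofReal p *
        ∫⁻ t in Ioi T, ENNReal.ofReal (t ^ (-p - 1)) * volume (shell N T t ∩ Ω) := by
  simp only [← Measure.restrict_restrict (measurableSet_farBall T),
    ← Measure.restrict_apply (measurableSet_shell T _)]
  exact setLIntegral_rpow_neg_eq_mul_lintegral_measure_Ico measurable_norm hT hp

theorem volume_lt_top_of_upperShellContent_lt_top (hφ : 1 < φ)
    (hr : upperShellContent N Ω φ r < ⊤) (hNr : (N : ℝ) + r < 0) : volume Ω < ⊤ := by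
  have hfar : volume (farBall N 1 ∩ Ω) < ⊤ := by
    simpa using setLIntegral_farBall_rpow_norm_lt_top (s := 0) one_pos hφ hr (by linarith)
  have hcover : Ω ⊆ shell N 0 1 ∪ (farBall N 1 ∩ Ω) := fun x hx =>
    (lt_or_ge ‖x‖ 1).imp (fun h => ⟨norm_nonneg x, h⟩) fun h => ⟨h, hx⟩
  exact ((measure_mono hcover).trans (measure_union_le _ _)).trans_lt
    (ENNReal.add_lt_top.2 ⟨volume_shell_lt_top 0 1, hfar⟩)

theorem neg_le_upperShellDim (hvol : volume Ω = ⊤) (hφ : 1 < φ) :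
    ((-N : ℝ) : EReal) ≤ upperShellDim N Ω φ := by
  refine le_sInf ?_
  rintro _ ⟨r, hr : upperShellContent N Ω φ r = 0, rfl⟩
  refine EReal.coe_le_coe_iff.2 (le_of_not_gt fun hlt => ?_)
  exact (volume_lt_top_of_upperShellContent_lt_top hφ (hr.trans_lt ENNReal.zero_lt_top)
    (by linarith)).ne hvol

end ShellDimension

theorem zeta_functional_identity_infinite_measure_general
    (N : ℕ) (Ω : Set (EuclideanSpace ℝ (Fin N))) (T : ℝ) (hT : 0 < T) (φ : ℝ) (hφ : 1 < φ)
    (σ : ℝ) (hσN : 0 < σ + N) (hσ : upperShellDim N Ω φ < (σ : EReal)) :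
    (∫⁻ x in farBall N T ∩ Ω, ENNReal.ofReal (‖x‖ ^ (-σ - (N : ℝ))) =
      ENNReal.ofReal (σ + N) *
        ∫⁻ t in Ioi T, ENNReal.ofReal (t ^ (-σ - (N : ℝ) - 1)) * volume (shell N T t ∩ Ω)) ∧
    (∫⁻ x in farBall N T ∩ Ω, ENNReal.ofReal (‖x‖ ^ (-σ - (N : ℝ)))) < ⊤ := by
  obtain ⟨_, ⟨r, hr : upperShellContent N Ω φ r = 0, rfl⟩, hrσ⟩ := sInf_lt_iff.1 hσ
  have hrσ' : r < σ := EReal.coe_lt_coe_iff.1 hrσ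
  have hexp : -σ - (N : ℝ) = -(σ + N) := by ring
  refine ⟨?_, setLIntegral_farBall_rpow_norm_lt_top hT hφ (hr.trans_lt ENNReal.zero_lt_top)
    (by linarith)⟩
  rw [hexp]
  exact setLIntegral_farBall_rpow_norm_neg_eq Ω hT hσN

theorem zeta_functional_identity_infinite_measure
    (N : ℕ) (Ω : Set (EuclideanSpace ℝ (Fin N))) (hΩ : MeasurableSet Ω)
    (hvol : volume Ω = ⊤) (T : ℝ) (hT : 0 < T) (φ : ℝ) (hφ : 1 < φ)
    (σ : ℝ) (hσ : upperShellDim N Ω φ < (σ : EReal)) :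
    (∫⁻ x in farBall N T ∩ Ω, ENNReal.ofReal (‖x‖ ^ (-σ - (N : ℝ))) =
      ENNReal.ofReal (σ + N) *
        ∫⁻ t in Ioi T, ENNReal.ofReal (t ^ (-σ - (N : ℝ) - 1)) * volume (shell N T t ∩ Ω)) ∧
    (∫⁻ x in farBall N T ∩ Ω, ENNReal.ofReal (‖x‖ ^ (-σ - (N : ℝ)))) < ⊤ := by
  have hσN : -(N : ℝ) < σ := EReal.coe_lt_coe_iff.1 ((neg_le_upperShellDim hvol hφ).trans_lt hσ)
  exact zeta_functional_identity_infinite_measure_general N Ω T hT φ hφ σ (by linarith) hσ
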